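/- Let p be an odd prime, S a commutative ring of characteristic p, and R = S[T, T₁₁, T₁₂, T₂₂] the polynomial ring in four variables. For ij ∈ {11, 12, 22} let D_ij : R → R be the S-linear operator D_ij(f) = (T_ij + 1)·∂f/∂T_ij. Define Θ₁(f) = T²·D₁₁(f) − T·D₁₂(f) + D₂₂(f) and Θ₃(f) = T^{2p}·D₁₁(f) − T^p·D₁₂(f) + D₂₂(f). Then the p-fold composite of Θ₁ equals Θ₃, i.e. Θ₁^p = Θ₃ as S-linear endomorphisms of R. -/

import Mathlib

open MvPolynomial

/-- The operator `D_ij : f ↦ (T_ij + 1)·∂f/∂T_ij` on `S[T, T₁₁, T₁₂, T₂₂]`,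
with the variables indexed by `Fin 4` as `0 ↦ T`, `1 ↦ T₁₁`, `2 ↦ T₁₂`, `3 ↦ T₂₂`. -/
noncomputable def Dij {S : Type*} [CommRing S] (i : Fin 4) (f : MvPolynomial (Fin 4) S) :
    MvPolynomial (Fin 4) S :=
  (X i + 1) * pderiv i f

/-- `Θ₁ f = T²·D₁₁ f − T·D₁₂ f + D₂₂ f`. -/
noncomputable def Theta1 {S : Type*} [CommRing S] (f : MvPolynomial (Fin 4) S) :
    MvPolynomial (Fin 4) S :=
  X 0 ^ 2 * Dij 1 f - X 0 * Dij 2 f + Dij 3 f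

/-- `Θ₂ f = 2T^{p+1}·D₁₁ f − (T + T^p)·D₁₂ f + 2·D₂₂ f`. -/
noncomputable def Theta2 {S : Type*} [CommRing S] (p : ℕ) (f : MvPolynomial (Fin 4) S) :
    MvPolynomial (Fin 4) S :=
  2 * X 0 ^ (p + 1) * Dij 1 f - (X 0 + X 0 ^ p) * Dij 2 f + 2 * Dij 3 f

/-- `Θ₃ f = T^{2p}·D₁₁ f − T^p·D₁₂ f + D₂₂ f`. -/
noncomputable def Theta3 {S : Type*} [CommRing S] (p : ℕ) (f : MvPolynomial (Fin 4) S) :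
    MvPolynomial (Fin 4) S :=
  X 0 ^ (2 * p) * Dij 1 f - X 0 ^ p * Dij 2 f + Dij 3 f

/-- `θ₄⁽ᴺ⁾ f = (T − T^p)·∂f/∂T + N·f`. -/
noncomputable def theta4 {S : Type*} [CommRing S] (p : ℕ) (N : ℤ) (f : MvPolynomial (Fin 4) S) :
    MvPolynomial (Fin 4) S :=
  (X 0 - X 0 ^ p) * pderiv 0 f + (N : MvPolynomial (Fin 4) S) * f

/-!
In characteristic `p` the `p`-th iterate of a derivation is again a derivation, because the middle
binomial coefficients in the general Leibniz rule vanish. Both `Θ₁^p` and `Θ₃` are therefore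
derivations of a polynomial ring, and it suffices to compare them on the variables. There `Θ₁` acts
on each `T_ij + 1` as multiplication by one of `T ^ 2`, `-T`, `1`, which `Θ₁` kills. So `Θ₁^p`
multiplies `T_ij + 1` by the `p`-th power of that eigenvalue, as does `Θ₃`, which is `Θ₁` with the
coefficient `T` replaced by `T ^ p`.
-/

section Derivation

open Finset.HasAntidiagonal (antidiagonal mem_antidiagonal)

variable {R A : Type*} [CommSemiring R] [CommSemiring A] [Algebra R A]

theorem derivation_iterate_mul (D : Derivation R A A) (n : ℕ) (a b : A) :
    D^[n] (a * b) =
      ∑ ij ∈ antidiagonal n, n.choose ij.1 • (D^[ij.1] a * D^[ij.2] b) := by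
  induction n with
  | zero => simp
  | succ n ih =>
    rw [Finset.sum_antidiagonal_choose_succ_nsmul (fun i j => D^[i] a * D^[j] b) n]
    simp only [Function.iterate_succ_apply', ih, map_sum, map_nsmul, Derivation.leibniz,
      smul_eq_mul, smul_add, Finset.sum_add_distrib]
    congr 1
    refine Finset.sum_congr rfl fun ⟨i, j⟩ hij => ?_
    rw [n.choose_symm_of_eq_add (mem_antidiagonal.1 hij).symm, mul_comm]

theorem derivation_iterate_char_mul (p : ℕ) [Fact p.Prime] [CharP A p] (D : Derivation R A A)
    (a b : A) : D^[p] (a * b) = a * D^[p] b + b * D^[p] a := by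
  have hp : p.Prime := Fact.out
  rw [derivation_iterate_mul, Finset.sum_eq_add (0, p) (p, 0)]
  · simp [mul_comm]
  · simp [hp.ne_zero.symm]
  · rintro ⟨i, j⟩ hij ⟨hi, hj⟩
    have hadd : i + j = p := mem_antidiagonal.1 hij
    have hdvd : p ∣ p.choose i := hp.dvd_choose_self (by grind) (by grind)
    rw [nsmul_eq_mul, (CharP.cast_eq_zero_iff A p _).2 hdvd, zero_mul]
  · simp
  · simp

/-- The `p`-th power of a derivation in characteristic `p`: the `p`-operation of the restricted Lie
algebra of derivations. -/
def derivationPowChar (p : ℕ) [Fact p.Prime] [CharP A p] (D : Derivation R A A) :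
    Derivation R A A where
  toLinearMap := (D : A →ₗ[R] A) ^ p
  map_one_eq_zero' := by
    obtain ⟨n, hn⟩ := Nat.exists_eq_succ_of_ne_zero (Fact.out : p.Prime).ne_zero
    simp [hn, pow_succ]
  leibniz' a b := by
    simpa only [Module.End.pow_apply] using! derivation_iterate_char_mul p D a b

theorem derivationPowChar_apply (p : ℕ) [Fact p.Prime] [CharP A p] (D : Derivation R A A) (a : A) :
    derivationPowChar p D a = D^[p] a :=
  Module.End.pow_apply (D : A →ₗ[R] A) p a

theorem derivation_sum_apply {ι : Type*} (s : Finset ι) (D : ι → Derivation R A A) (a : A) :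
    (∑ i ∈ s, D i) a = ∑ i ∈ s, D i a := by
  rw [← Derivation.coeFnAddMonoidHom_apply, map_sum, Finset.sum_apply]
  rfl

theorem derivation_iterate_of_apply_eq_mul {D : Derivation R A A} {c x : A} (hc : D c = 0)
    (hx : D x = c * x) (n : ℕ) : D^[n] x = c ^ n * x := by
  induction n with
  | zero => simp
  | succ n ih =>
    rw [Function.iterate_succ_apply', ih, D.leibniz, D.leibniz_pow, hc, hx]
    simp only [smul_eq_mul, smul_zero, mul_zero, add_zero, pow_succ, mul_assoc]

end Derivation

section TorusDerivation

variable {σ S : Type*} [CommSemiring S]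

/-- The vector field `∑ i, c i · (X i + 1) · ∂/∂X i`, a combination of the invariant vector fields
of the torus with multiplicative coordinates `X i + 1`. It is encoded by its values on the
variables, so that `σ` may be infinite. -/
noncomputable def torusDerivation (c : σ → MvPolynomial σ S) :
    Derivation S (MvPolynomial σ S) (MvPolynomial σ S) :=
  mkDerivation S fun i => c i * (X i + 1)

theorem torusDerivation_X (c : σ → MvPolynomial σ S) (i : σ) :
    torusDerivation c (X i) = c i * (X i + 1) :=
  mkDerivation_X S _ i

theorem torusDerivation_X_add_one (c : σ → MvPolynomial σ S) (i : σ) :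
    torusDerivation c (X i + 1) = c i * (X i + 1) := by
  rw [map_add, Derivation.map_one_eq_zero, add_zero, torusDerivation_X]

theorem torusDerivation_apply [Fintype σ] (c : σ → MvPolynomial σ S)
    (f : MvPolynomial σ S) :
    torusDerivation c f = ∑ i, c i * ((X i + 1) * pderiv i f) := by
  classical
  have h : torusDerivation c = ∑ i, (c i * (X i + 1)) • pderiv i := by
    ext j
    simp [torusDerivation_X, derivation_sum_apply, Pi.single_apply]
  simp [h, derivation_sum_apply, mul_assoc]

theorem derivationPowChar_torusDerivation (p : ℕ) [Fact p.Prime] [CharP S p]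
    {c : σ → MvPolynomial σ S} (hc : ∀ i, torusDerivation c (c i) = 0) :
    derivationPowChar p (torusDerivation c) = torusDerivation (c ^ p) := by
  ext1 i
  calc derivationPowChar p (torusDerivation c) (X i)
      = derivationPowChar p (torusDerivation c) (X i + 1) := by
        rw [map_add, Derivation.map_one_eq_zero, add_zero]
    _ = c i ^ p * (X i + 1) := by
        rw [derivationPowChar_apply,
          derivation_iterate_of_apply_eq_mul (hc i) (torusDerivation_X_add_one c i)]
    _ = torusDerivation (c ^ p) (X i) := by rw [torusDerivation_X, Pi.pow_apply]

end TorusDerivation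

section Theta

variable {S : Type*} [CommRing S]

/-- The coefficients of `Θ₁` and `Θ₃` along `T, T₁₁, T₁₂, T₂₂`, at `t = T` and `t = T ^ p`
respectively. -/
def thetaCoeff {A : Type*} [Ring A] (t : A) : Fin 4 → A :=
  ![0, t ^ 2, -t, 1]

theorem thetaCoeff_pow_char {A : Type*} [Ring A] (p : ℕ) [Fact p.Prime] [CharP A p] (t : A) :
    thetaCoeff t ^ p = thetaCoeff (t ^ p) := by
  have hp : p ≠ 0 := (Fact.out : p.Prime).ne_zero
  ext i
  fin_cases i
  · simp [thetaCoeff, hp]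
  · simp [thetaCoeff, pow_right_comm]
  · simp [thetaCoeff, neg_pow t, neg_one_pow_char]
  · simp [thetaCoeff]

theorem derivation_thetaCoeff_eq_zero {R A : Type*} [CommSemiring R] [CommRing A] [Algebra R A]
    {D : Derivation R A A} {t : A} (ht : D t = 0) (i : Fin 4) : D (thetaCoeff t i) = 0 := by
  fin_cases i <;> simp [thetaCoeff, Derivation.leibniz_pow, ht]

theorem torusDerivation_thetaCoeff (t f : MvPolynomial (Fin 4) S) :
    torusDerivation (thetaCoeff t) f = t ^ 2 * Dij 1 f - t * Dij 2 f + Dij 3 f := by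
  simp [torusDerivation_apply, Fin.sum_univ_four, thetaCoeff, Dij, sub_eq_add_neg]

theorem Theta1_eq_torusDerivation :
    Theta1 (S := S) = torusDerivation (thetaCoeff (X 0)) := by
  ext1 f
  rw [torusDerivation_thetaCoeff, Theta1]

theorem Theta3_eq_torusDerivation (p : ℕ) :
    Theta3 (S := S) p = torusDerivation (thetaCoeff (X 0 ^ p)) := by
  ext1 f
  rw [torusDerivation_thetaCoeff, Theta3, ← pow_mul, mul_comm p]

end Theta

theorem stmt_10_general (p : ℕ) (hp : p.Prime) (S : Type*) [CommRing S] [CharP S p]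
    (f : MvPolynomial (Fin 4) S) :
    (Theta1 (S := S))^[p] f = Theta3 p f := by
  have : Fact p.Prime := ⟨hp⟩
  have hT : torusDerivation (thetaCoeff (X 0 : MvPolynomial (Fin 4) S)) (X 0) = 0 := by
    simp [torusDerivation_X, thetaCoeff]
  calc (Theta1 (S := S))^[p] f
      = derivationPowChar p (torusDerivation (thetaCoeff (X 0))) f := by
        rw [Theta1_eq_torusDerivation, derivationPowChar_apply]
    _ = torusDerivation (thetaCoeff (X 0) ^ p) f := by
        rw [derivationPowChar_torusDerivation p (derivation_thetaCoeff_eq_zero hT)]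
    _ = Theta3 p f := by
        rw [thetaCoeff_pow_char, Theta3_eq_torusDerivation]

/-- Let `p` be an odd prime and `S` a commutative ring of characteristic `p`.  Then the
`p`-fold composite of `Θ₁` equals `Θ₃` on `S[T, T₁₁, T₁₂, T₂₂]`. -/
theorem stmt_10 (p : ℕ) (hp : p.Prime) (hodd : Odd p)
    (S : Type*) [CommRing S] [CharP S p] (f : MvPolynomial (Fin 4) S) :
    (Theta1 (S := S))^[p] f = Theta3 p f :=
  stmt_10_general p hp S f
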